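/- Let S = (S, I, O, G, D, h) be a weakly-complete deterministic TFSM with output delays all of whose guards are half-open intervals [u,v) with integers 0 ≤ u < v. Then the number of transitions of the region FSM R(S) satisfies |R(h)| ≤ |h|·(2|h| − 1) ≤ 2|h|²; in particular, the size of R(S) is polynomial in the size of S. -/

import Mathlib

/-!
A region transition refining a transition `tr` of `M` is determined by `tr` together with the
lower endpoint of its abstract guard, because the upper endpoint is the next boundary point for
the input of `tr` (`refinedGuards_eq_of_lo_eq`). The guards of `M` have at most `2|M|` endpoints in
all (`card_endpoints_le`), and the largest one is not a lower endpoint of any abstract guard, so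
at most `2|M| - 1` lower endpoints remain. This injects `R(h)` into a set of size
`|M| * (2|M| - 1)`.
-/

/-- A timed guard: an interval with natural-number endpoints, left-closed, and
either right-open (`rightClosed = false`, i.e. `[lo, hi)`) or right-closed
(`rightClosed = true`, i.e. `[lo, hi]`; point intervals are `[u,u]`). -/
structure Guard where
  lo : ℕ
  hi : ℕ
  rightClosed : Bool
deriving DecidableEq

/-- Membership of a timestamp in a guard. -/
def GuardMem (g : Guard) (t : ℝ) : Prop :=
  (g.lo : ℝ) ≤ t ∧ (if g.rightClosed then t ≤ (g.hi : ℝ) else t < (g.hi : ℝ))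

/-- Guard inclusion (as sets of timestamps). -/
def GuardSub (g g' : Guard) : Prop := ∀ t : ℝ, GuardMem g t → GuardMem g' t

/-- A transition of a TFSM with output delays: source state, input, timed guard,
output, positive integer output delay, destination state. -/
structure TTrans (S I O : Type) where
  src : S
  inp : I
  guard : Guard
  out : O
  delay : ℕ+
  dst : S

/-- A TFSM with output delays over states `S`, inputs `I`, outputs `O`,
given by its transition relation. -/
abbrev TFSM (S I O : Type) := Set (TTrans S I O)

variable {S I O A B : Type}

/-- Determinism: any two distinct transitions from the same state on the same input
have disjoint guards. -/
def TFSMDeterministic (M : TFSM S I O) : Prop :=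
  ∀ tr ∈ M, ∀ tr' ∈ M, tr.src = tr'.src → tr.inp = tr'.inp → tr ≠ tr' →
    ∀ t : ℝ, ¬ (GuardMem tr.guard t ∧ GuardMem tr'.guard t)

/-- A timed input sequence: nonnegative, nondecreasing timestamps. -/
def IsTimedInputSeq (α : List (I × ℝ)) : Prop :=
  (∀ p ∈ α, 0 ≤ p.2) ∧ List.Chain' (· ≤ ·) (α.map Prod.snd)

/-- `TRunTo M s t0 α trs sf`: starting at state `s` at time `t0`, the timed input
sequence `α` induces the sequence of transitions `trs`, ending at state `sf`. -/
inductive TRunTo (M : TFSM S I O) : S → ℝ → List (I × ℝ) → List (TTrans S I O) → S → Prop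
  | nil (s : S) (t0 : ℝ) : TRunTo M s t0 [] [] s
  | cons {s sf : S} {t0 t : ℝ} {i : I} {tr : TTrans S I O}
      {rest : List (I × ℝ)} {trs : List (TTrans S I O)} :
      tr ∈ M → tr.src = s → tr.inp = i → GuardMem tr.guard (t - t0) →
      TRunTo M tr.dst t rest trs sf →
      TRunTo M s t0 ((i, t) :: rest) (tr :: trs) sf

/-- `α` induces the sequence of transitions `trs` from state `s`. -/
def TInduces (M : TFSM S I O) (s : S) (α : List (I × ℝ)) (trs : List (TTrans S I O)) : Prop :=
  ∃ sf : S, TRunTo M s 0 α trs sf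

/-- `Dom(s)`: the timed input sequences inducing at least one sequence of transitions from `s`. -/
def TDom (M : TFSM S I O) (s : S) : Set (List (I × ℝ)) :=
  { α | IsTimedInputSeq α ∧ ∃ trs, TInduces M s α trs }

/-- `next_state(s, α) = sf` (as a relation, since `next_state` is partial). -/
def TReaches (M : TFSM S I O) (s : S) (α : List (I × ℝ)) (sf : S) : Prop :=
  ∃ trs, TRunTo M s 0 α trs sf

/-- The timed outputs of a run: the `j`-th transition produces its output at time
`t_j + d_j`. -/
def rawOutputs (α : List (I × ℝ)) (trs : List (TTrans S I O)) : List (O × ℝ) :=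
  List.zipWith (fun p tr => (tr.out, p.2 + ((tr.delay : ℕ) : ℝ))) α trs

/-- `timed_out(s, α)`: all time-sorted reorderings of the timed outputs of the run of `α` at `s`. -/
def timedOut (M : TFSM S I O) (s : S) (α : List (I × ℝ)) : Set (List (O × ℝ)) :=
  { β | ∃ trs sf, TRunTo M s 0 α trs sf ∧ List.Perm β (rawOutputs α trs) ∧
        List.Chain' (· ≤ ·) (β.map Prod.snd) }

/-- Homing sequence for a TFSM with output delays. -/
def THoming (M : TFSM S I O) (α : List (I × ℝ)) : Prop :=
  IsTimedInputSeq α ∧ ∀ s1 s2 : S, timedOut M s1 α = timedOut M s2 α →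
    ∃ sf : S, TReaches M s1 α sf ∧ TReaches M s2 α sf

/-- Synchronizing sequence for a TFSM with output delays. -/
def TSync (M : TFSM S I O) (α : List (I × ℝ)) : Prop :=
  IsTimedInputSeq α ∧ ∃ sf : S, ∀ s : S, TReaches M s α sf

/-- A timed input sequence is non-integer if the difference of any two distinct
timestamps is not an integer. -/
def NonInteger (α : List (I × ℝ)) : Prop :=
  ∀ j k : Fin α.length, j ≠ k → ∀ z : ℤ, (α.get j).2 - (α.get k).2 ≠ (z : ℝ)

/-- A transition of an (untimed) FSM. -/
structure FTrans (S A B : Type) where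
  src : S
  inp : A
  out : B
  dst : S

/-- An (untimed) FSM given by its transition relation. -/
abbrev UntimedFSM (S A B : Type) := Set (FTrans S A B)

/-- FSM run: input sequence, produced output sequence, final state. -/
inductive FRunTo (T : UntimedFSM S A B) : S → List A → List B → S → Prop
  | nil (s : S) : FRunTo T s [] [] s
  | cons {s sf : S} {a : A} {rest : List A} {γ : List B} {f : FTrans S A B} :
      f ∈ T → f.src = s → f.inp = a → FRunTo T f.dst rest γ sf →
      FRunTo T s (a :: rest) (f.out :: γ) sf

def FReaches (T : UntimedFSM S A B) (s : S) (β : List A) (sf : S) : Prop :=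
  ∃ γ, FRunTo T s β γ sf

/-- `out(s, β)` for an FSM (a set, i.e. a partial value, since the FSM may be partial). -/
def FOut (T : UntimedFSM S A B) (s : S) (β : List A) : Set (List B) :=
  { γ | ∃ sf, FRunTo T s β γ sf }

def FDeterministic (T : UntimedFSM S A B) : Prop :=
  ∀ f ∈ T, ∀ f' ∈ T, f.src = f'.src → f.inp = f'.inp → f = f'

/-- Completeness of an FSM relative to an input alphabet `A0`. -/
def FCompleteOn (T : UntimedFSM S A B) (A0 : Set A) : Prop :=
  ∀ s : S, ∀ a ∈ A0, ∃ f ∈ T, f.src = s ∧ f.inp = a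

/-- Synchronizing sequence for an FSM. -/
def FSync (T : UntimedFSM S A B) (β : List A) : Prop :=
  ∃ sf : S, ∀ s : S, FReaches T s β sf

/-- Homing sequence for an FSM. -/
def FHoming (T : UntimedFSM S A B) (β : List A) : Prop :=
  ∀ s1 s2 : S, FOut T s1 β = FOut T s2 β →
    ∃ sf : S, FReaches T s1 β sf ∧ FReaches T s2 β sf

/-- The guards appearing on transitions labeled with input `i`. -/
def guardsOf (M : TFSM S I O) (i : I) : Set Guard :=
  { g | ∃ tr ∈ M, tr.inp = i ∧ tr.guard = g }

/-- Boundary points of the guards labeled `i`. -/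
def boundaries (M : TFSM S I O) (i : I) : Set ℕ :=
  { p | ∃ g ∈ guardsOf M i, g.lo = p ∨ g.hi = p }

/-- `Ḡ_i`: the half-open intervals determined by consecutive boundary points of `G_i`. -/
def refinedGuards (M : TFSM S I O) (i : I) : Set Guard :=
  { g | g.rightClosed = false ∧ g.lo ∈ boundaries M i ∧ g.hi ∈ boundaries M i ∧
        g.lo < g.hi ∧ ∀ r ∈ boundaries M i, ¬ (g.lo < r ∧ r < g.hi) }

/-- The abstract input alphabet `I_G = {(i, g) : g ∈ Ḡ_i}`. -/
def absInputs (M : TFSM S I O) : Set (I × Guard) :=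
  { p | p.2 ∈ refinedGuards M p.1 }

/-- The region FSM `R(S)` of a TFSM with output delays. -/
def regionFSM (M : TFSM S I O) : UntimedFSM S (I × Guard) (O × ℕ+) :=
  { f | f.inp ∈ absInputs M ∧ ∃ tr ∈ M, tr.src = f.src ∧ tr.inp = f.inp.1 ∧
        tr.out = f.out.1 ∧ tr.delay = f.out.2 ∧ tr.dst = f.dst ∧ GuardSub f.inp.2 tr.guard }

/-- All guards are half-open intervals `[u, v)` with `u < v`. -/
def HalfOpenGuards (M : TFSM S I O) : Prop :=
  ∀ tr ∈ M, tr.guard.rightClosed = false ∧ tr.guard.lo < tr.guard.hi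

/-- Weak completeness: all states have the same domain. -/
def WeaklyComplete (M : TFSM S I O) : Prop :=
  ∀ s s' : S, TDom M s = TDom M s'

/-- `Projects M t0 α β`: `β` is the untimed projection `[α]_{I_G}` of `α`
(relative to previous timestamp `t0`). -/
inductive Projects (M : TFSM S I O) : ℝ → List (I × ℝ) → List (I × Guard) → Prop
  | nil (t0 : ℝ) : Projects M t0 [] []
  | cons {t0 t : ℝ} {i : I} {g : Guard} {rest : List (I × ℝ)} {brest : List (I × Guard)} :
      g ∈ refinedGuards M i → GuardMem g (t - t0) →
      Projects M t rest brest →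
      Projects M t0 ((i, t) :: rest) ((i, g) :: brest)

/-- All guards are point intervals `[u, u]` with `u` a positive integer. -/
def PointIntervals (M : TFSM S I O) : Prop :=
  ∀ tr ∈ M, tr.guard.rightClosed = true ∧ tr.guard.lo = tr.guard.hi ∧ 0 < tr.guard.lo

/-- The region FSM of a TFSM with only point intervals: abstract inputs are the
(input, guard) pairs appearing on transitions. -/
def pointRegionFSM (M : TFSM S I O) : UntimedFSM S (I × Guard) (O × ℕ+) :=
  { f | ∃ tr ∈ M, tr.src = f.src ∧ (tr.inp, tr.guard) = f.inp ∧
        (tr.out, tr.delay) = f.out ∧ tr.dst = f.dst }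

/-- `t(α)`: the last timestamp of `α` (0 for the empty sequence). -/
def tEnd (α : List (I × ℝ)) : ℝ := (α.map Prod.snd).getLastD 0

/-- The number of timed outputs of the run produced at or after time `t(α)`
(counted with multiplicity). -/
noncomputable def tailCount (α : List (I × ℝ)) (trs : List (TTrans S I O)) : ℕ :=
  ((rawOutputs α trs).filter (fun p => decide (tEnd α ≤ p.2))).length

/-- The timed output tail of a run: the multiset of `(o, τ - t(α))` over timed
outputs `(o, τ)` of the run with `τ ≥ t(α)`. -/
noncomputable def tailOf (α : List (I × ℝ)) (trs : List (TTrans S I O)) : Multiset (O × ℝ) :=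
  ↑(((rawOutputs α trs).filter (fun p => decide (tEnd α ≤ p.2))).map
      (fun p => (p.1, p.2 - tEnd α)))

/-- The set of all timed output tails of the TFSM, together with the empty tail. -/
def Tout (M : TFSM S I O) : Set (Multiset (O × ℝ)) :=
  insert 0 { m | ∃ (s : S) (α : List (I × ℝ)) (trs : List (TTrans S I O)) (sf : S),
    α ∈ TDom M s ∧ TRunTo M s 0 α trs sf ∧ m = tailOf α trs }

/-- The output delay at state `j` of the machine `B_n`. -/
def BnDelay (n : ℕ) (j : Fin n) : ℕ+ :=
  if (j : ℕ) = n - 2 then 3 else if (j : ℕ) = n - 1 then 1 else 2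

/-- The transition of `B_n` out of state `j`. -/
def BnTrans (n : ℕ) [NeZero n] (j : Fin n) : TTrans (Fin n) Unit Unit :=
  ⟨j, (), ⟨1, 1, true⟩, (), BnDelay n j, j + 1⟩

/-- The TFSM `B_n` with only point intervals. -/
def Bn (n : ℕ) [NeZero n] : TFSM (Fin n) Unit Unit := Set.range (BnTrans n)

/-- A refined guard is determined by its lower endpoint: the upper one is the next boundary
point. -/
lemma refinedGuards_eq_of_lo_eq {S I O : Type} {M : TFSM S I O} {i : I} {g g' : Guard}
    (hg : g ∈ refinedGuards M i) (hg' : g' ∈ refinedGuards M i) (h : g.lo = g'.lo) : g = g' := by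
  obtain ⟨hc, -, hhi, hlt, hgap⟩ := hg
  obtain ⟨hc', -, hhi', hlt', hgap'⟩ := hg'
  have h1 := hgap _ hhi'
  have h2 := hgap' _ hhi
  have h3 : g.hi = g'.hi := by omega
  cases g
  cases g'
  simp_all

open Classical in
/-- All endpoints of guards on a finite set of transitions, whatever their input. -/
noncomputable def endpoints {S I O : Type} (T : Finset (TTrans S I O)) : Finset ℕ :=
  T.image (fun tr => tr.guard.lo) ∪ T.image (fun tr => tr.guard.hi)

lemma card_endpoints_le {S I O : Type} (T : Finset (TTrans S I O)) :
    (endpoints T).card ≤ 2 * T.card := by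
  classical
  have h1 := Finset.card_union_le (T.image (fun tr => tr.guard.lo))
    (T.image (fun tr => tr.guard.hi))
  have h2 := Finset.card_image_le (s := T) (f := fun tr => tr.guard.lo)
  have h3 := Finset.card_image_le (s := T) (f := fun tr => tr.guard.hi)
  unfold endpoints
  convert (show _ ≤ 2 * T.card from h1.trans (by omega))

lemma mem_endpoints_of_mem_boundaries {S I O : Type} {T : Finset (TTrans S I O)} {i : I} {p : ℕ}
    (hp : p ∈ boundaries (T : Set (TTrans S I O)) i) : p ∈ endpoints T := by
  obtain ⟨g, ⟨tr, htr, -, rfl⟩, h⟩ := hp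
  simp only [endpoints, Finset.mem_union, Finset.mem_image]
  exact h.imp (fun h => ⟨tr, htr, h⟩) (fun h => ⟨tr, htr, h⟩)

/-- for a weakly-complete deterministic TFSM with half-open guards, the
number of transitions of the region FSM satisfies `|R(h)| ≤ |h|·(2|h| − 1) ≤ 2|h|²`. -/
theorem stmt7 {S I O : Type} [Fintype S] [Nonempty S] [Fintype I] [Nonempty I]
    [Fintype O] [Nonempty O]
    (M : TFSM S I O) (hfin : Set.Finite M) (hdet : TFSMDeterministic M)
    (hwc : WeaklyComplete M) (hho : HalfOpenGuards M) :
    Set.ncard (regionFSM M) ≤ Set.ncard M * (2 * Set.ncard M - 1) ∧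
    Set.ncard M * (2 * Set.ncard M - 1) ≤ 2 * Set.ncard M ^ 2 := by
  classical
  refine ⟨?_, ?_⟩
  · obtain ⟨T, rfl⟩ := hfin.exists_finset_coe
    rw [Set.ncard_coe_finset]
    rcases T.eq_empty_or_nonempty with rfl | ⟨tr₀, htr₀⟩
    · have : regionFSM ((∅ : Finset (TTrans S I O)) : Set (TTrans S I O)) = ∅ := by
        ext f
        simp [regionFSM]
      rw [this]
      simp
    have hne : (endpoints T).Nonempty :=
      ⟨tr₀.guard.lo, mem_endpoints_of_mem_boundaries (i := tr₀.inp)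
        ⟨tr₀.guard, ⟨tr₀, htr₀, rfl, rfl⟩, Or.inl rfl⟩⟩
    have hw : ∀ f : FTrans S (I × Guard) (O × ℕ+), ∃ tr : TTrans S I O,
        f ∈ regionFSM (T : Set (TTrans S I O)) → tr ∈ T ∧ tr.src = f.src ∧ tr.inp = f.inp.1 ∧
          tr.out = f.out.1 ∧ tr.delay = f.out.2 ∧ tr.dst = f.dst := by
      intro f
      by_cases hf : f ∈ regionFSM (T : Set (TTrans S I O))
      · obtain ⟨-, tr, h, h1, h2, h3, h4, h5, -⟩ := hf
        exact ⟨tr, fun _ => ⟨h, h1, h2, h3, h4, h5⟩⟩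
      · exact ⟨tr₀, fun h => absurd h hf⟩
    choose w hw using hw
    let B := (endpoints T).erase ((endpoints T).max' hne)
    have hB : B.card ≤ 2 * T.card - 1 := by
      have h1 := card_endpoints_le T
      have h2 := Finset.card_erase_of_mem ((endpoints T).max'_mem hne)
      change ((endpoints T).erase _).card ≤ _
      omega
    have hle : (regionFSM (T : Set (TTrans S I O))).ncard ≤
        ((T ×ˢ B : Finset (TTrans S I O × ℕ)) : Set (TTrans S I O × ℕ)).ncard := by
      refine Set.ncard_le_ncard_of_injOn (fun f => (w f, f.inp.2.lo)) ?_ ?_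
        (Finset.finite_toSet _)
      · intro f hf
        obtain ⟨-, hlo, hhi, hlt, -⟩ := hf.1
        have hmax := (endpoints T).le_max' _ (mem_endpoints_of_mem_boundaries hhi)
        simp only [Finset.mem_coe, Finset.mem_product]
        exact ⟨(hw f hf).1, Finset.mem_erase.2
          ⟨by omega, mem_endpoints_of_mem_boundaries hlo⟩⟩
      · intro f hf f' hf' heq
        obtain ⟨hwe, hlo⟩ := Prod.mk.inj heq
        obtain ⟨-, a1, a2, a3, a4, a5⟩ := hw f hf
        obtain ⟨-, b1, b2, b3, b4, b5⟩ := hw f' hf'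
        rw [← hwe] at b1 b2 b3 b4 b5
        have hi : f.inp.1 = f'.inp.1 := a2.symm.trans b2
        have hr : f.inp.2 ∈ refinedGuards (T : Set (TTrans S I O)) f.inp.1 := hf.1
        have hr' : f'.inp.2 ∈ refinedGuards (T : Set (TTrans S I O)) f'.inp.1 := hf'.1
        have hg := refinedGuards_eq_of_lo_eq hr (hi ▸ hr') hlo
        obtain ⟨s, ⟨i, g⟩, ⟨o, d⟩, t⟩ := f
        obtain ⟨s', ⟨i', g'⟩, ⟨o', d'⟩, t'⟩ := f'
        simp_all
    rw [Set.ncard_coe_finset, Finset.card_product] at hle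
    exact hle.trans (Nat.mul_le_mul_left _ hB)
  · calc M.ncard * (2 * M.ncard - 1) ≤ M.ncard * (2 * M.ncard) :=
          Nat.mul_le_mul_left _ (Nat.sub_le _ _)
      _ = 2 * M.ncard ^ 2 := by ring
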